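/- Suppose λ > 0 and ψ : V → ℝ satisfies ψ(1) < 0 and the positive-part recursion with parameter λ. Then the following are equivalent: (1) E_ν(ψ,ψ) = λ Var_π(ψ); (2) π(ψ) = 0; (3) λ = λ^G_{π,ν}. Moreover, if n ≥ 3, each of these is also equivalent to (4) E_ν(ψ,ψ) = λ^G_{π,ν} Var_π(ψ). -/

import Mathlib

open Finset

/-- Dirichlet form on the path with vertices `{1,…,n}`;
`ν i` denotes the weight of edge `{i, i+1}`. -/
noncomputable def EForm (n : ℕ) (ν : ℕ → ℝ) (f g : ℕ → ℝ) : ℝ :=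
  ∑ i ∈ Finset.Icc 1 (n - 1), (f i - f (i + 1)) * (g i - g (i + 1)) * ν i

/-- Mean of `f` with respect to `π` on `{1,…,n}`. -/
noncomputable def piMean (n : ℕ) (π : ℕ → ℝ) (f : ℕ → ℝ) : ℝ :=
  ∑ i ∈ Finset.Icc 1 n, f i * π i

/-- Variance of `f` with respect to `π` on `{1,…,n}`. -/
noncomputable def varPi (n : ℕ) (π : ℕ → ℝ) (f : ℕ → ℝ) : ℝ :=
  piMean n π (fun i => (f i) ^ 2) - (piMean n π f) ^ 2

/-- `f` is non-constant on `{1,…,n}`. -/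
def Nonconstant (n : ℕ) (f : ℕ → ℝ) : Prop :=
  ∃ i ∈ Finset.Icc 1 n, ∃ j ∈ Finset.Icc 1 n, f i ≠ f j

/-- `lam` is the spectral gap: the minimum of the Rayleigh quotients over
non-constant functions. -/
def IsSpectralGap (n : ℕ) (π ν : ℕ → ℝ) (lam : ℝ) : Prop :=
  IsLeast {r : ℝ | ∃ f : ℕ → ℝ, Nonconstant n f ∧ r = EForm n ν f f / varPi n π f} lam

/-- The positive-part recursion with parameter `lam`:
`ψ(i+1) = ψ(i) + max{[ψ(i)−ψ(i−1)]ν(i−1,i) − λ π(i) ψ(i), 0}/ν(i,i+1)` for `1 ≤ i < n`. -/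
def PosPartRec (n : ℕ) (π ν : ℕ → ℝ) (lam : ℝ) (ψ : ℕ → ℝ) : Prop :=
  ∀ i, 1 ≤ i → i < n →
    ψ (i + 1) = ψ i + max ((ψ i - ψ (i - 1)) * ν (i - 1) - lam * (π i * ψ i)) 0 / ν i

lemma pos_of_mul_pos_of_pos_right {a b : ℝ} (h : 0 < a * b) (hb : 0 ≤ b) : 0 < a := by
  by_contra hc
  push Not at hc
  nlinarith

lemma pos_of_mul_pos_of_pos_left {a b : ℝ} (h : 0 < a * b) (ha : 0 ≤ a) : 0 < b := by
  by_contra hc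
  push Not at hc
  nlinarith

lemma aux_abel (p r : ℕ → ℝ) (k : ℕ) :
    ∑ i ∈ Icc 1 (k+1), p i * r i = (∑ i ∈ Icc 1 (k+1), p i) * r (k+1)
      - ∑ i ∈ Icc 1 k, (∑ j ∈ Icc 1 i, p j) * (r (i+1) - r i) := by
  induction k with
  | zero => simp
  | succ k ih =>
    rw [Finset.sum_Icc_succ_top (by omega), ih, Finset.sum_Icc_succ_top (b := k+1) (by omega) (f := p),
      Finset.sum_Icc_succ_top (by omega) (f := fun i => (∑ j ∈ Icc 1 i, p j) * (r (i+1) - r i))]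
    ring

lemma aux_parts (a g : ℕ → ℝ) (h0 : a 0 = 0) (k : ℕ) :
    ∑ i ∈ Icc 1 k, a i * (g (i+1) - g i)
      = ∑ i ∈ Icc 1 k, (a (i-1) - a i) * g i + a k * g (k+1) := by
  induction k with
  | zero => simp [h0]
  | succ k ih =>
    rw [Finset.sum_Icc_succ_top (by omega), ih, Finset.sum_Icc_succ_top (by omega)]
    simp only [Nat.add_sub_cancel]
    ring

lemma aux_telesc (a : ℕ → ℝ) (h0 : a 0 = 0) (k : ℕ) :
    ∑ i ∈ Icc 1 k, (a (i-1) - a i) = - a k := by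
  induction k with
  | zero => simp [h0]
  | succ k ih =>
    rw [Finset.sum_Icc_succ_top (by omega), ih]
    simp only [Nat.add_sub_cancel]
    ring

/-- flux -/
noncomputable def flux (ν ψ : ℕ → ℝ) (i : ℕ) : ℝ := (ψ (i+1) - ψ i) * ν i

lemma EForm_eq (n : ℕ) (hn : 1 ≤ n) (ν f g : ℕ → ℝ) (h0 : ν 0 = 0) (h1 : ν n = 0) :
    EForm n ν f g = ∑ i ∈ Icc 1 n, (flux ν f (i-1) - flux ν f i) * g i := by
  obtain ⟨N, rfl⟩ : ∃ N, n = N + 1 := ⟨n - 1, by omega⟩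
  have := aux_parts (flux ν f) g (by simp [flux, h0]) N
  rw [Finset.sum_Icc_succ_top (by omega)]
  have e : EForm (N+1) ν f g = ∑ i ∈ Icc 1 N, flux ν f i * (g (i+1) - g i) := by
    unfold EForm flux
    simp only [Nat.add_sub_cancel]
    refine Finset.sum_congr rfl fun i _ => by ring
  rw [e, this]
  have : flux ν f (N+1) = 0 := by simp [flux, h1]
  simp [this]

lemma cov_double (s : Finset ℕ) (p u v : ℕ → ℝ) (hp : ∑ i ∈ s, p i = 1) :
    ∑ x ∈ s, ∑ y ∈ s, p x * p y * ((u y - u x) * (v y - v x))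
      = 2 * (∑ i ∈ s, u i * v i * p i - (∑ i ∈ s, u i * p i) * (∑ i ∈ s, v i * p i)) := by
  have key : ∀ x ∈ s, ∑ y ∈ s, p x * p y * ((u y - u x) * (v y - v x))
      = p x * (∑ i ∈ s, u i * v i * p i) - (v x * p x) * (∑ i ∈ s, u i * p i)
        - (u x * p x) * (∑ i ∈ s, v i * p i) + u x * v x * p x * ∑ i ∈ s, p i := by
    intro x _
    simp only [Finset.mul_sum, ← Finset.sum_sub_distrib, ← Finset.sum_add_distrib]
    refine Finset.sum_congr rfl fun y _ => by ring
  rw [Finset.sum_congr rfl key]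
  simp only [Finset.sum_add_distrib, Finset.sum_sub_distrib, ← Finset.sum_mul, hp]
  ring

lemma var_double (n : ℕ) (p f : ℕ → ℝ) (hp : ∑ i ∈ Icc 1 n, p i = 1) :
    2 * varPi n p f = ∑ x ∈ Icc 1 n, ∑ y ∈ Icc 1 n, p x * p y * (f y - f x)^2 := by
  have := cov_double (Icc 1 n) p f f hp
  simp only [varPi, piMean, sq] at *
  rw [this]

lemma var_pos (n : ℕ) (p f : ℕ → ℝ) (hpp : ∀ i ∈ Icc 1 n, 0 < p i)
    (hp : ∑ i ∈ Icc 1 n, p i = 1) (hf : Nonconstant n f) : 0 < varPi n p f := by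
  have h := var_double n p f hp
  obtain ⟨i, hi, j, hj, hij⟩ := hf
  have nn : ∀ x ∈ Icc 1 n, ∀ y ∈ Icc 1 n, 0 ≤ p x * p y * (f y - f x)^2 := fun x hx y hy =>
    mul_nonneg (mul_pos (hpp x hx) (hpp y hy)).le (sq_nonneg _)
  have : 0 < ∑ x ∈ Icc 1 n, ∑ y ∈ Icc 1 n, p x * p y * (f y - f x)^2 := by
    refine Finset.sum_pos' (fun x hx => Finset.sum_nonneg (nn x hx)) ⟨i, hi, ?_⟩
    refine Finset.sum_pos' (nn i hi) ⟨j, hj, ?_⟩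
    have : f j - f i ≠ 0 := sub_ne_zero.2 (Ne.symm hij)
    have := hpp i hi
    have := hpp j hj
    positivity
  linarith

lemma EForm_const (n : ℕ) (ν f : ℕ → ℝ) (hf : ¬ Nonconstant n f) : EForm n ν f f = 0 := by
  unfold Nonconstant at hf
  push Not at hf
  unfold EForm
  refine Finset.sum_eq_zero fun i hi => ?_
  rw [Finset.mem_Icc] at hi
  rw [hf i (Finset.mem_Icc.2 ⟨by omega, by omega⟩) (i+1) (Finset.mem_Icc.2 ⟨by omega, by omega⟩)]
  ring

lemma var_const (n : ℕ) (p f : ℕ → ℝ) (hp : ∑ i ∈ Icc 1 n, p i = 1) (hf : ¬ Nonconstant n f) :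
    varPi n p f = 0 := by
  have h := var_double n p f hp
  unfold Nonconstant at hf
  push Not at hf
  have : ∑ x ∈ Icc 1 n, ∑ y ∈ Icc 1 n, p x * p y * (f y - f x)^2 = 0 := by
    refine Finset.sum_eq_zero fun x hx => Finset.sum_eq_zero fun y hy => ?_
    rw [hf x hx y hy]; ring
  linarith

lemma gap_le (n : ℕ) (p ν : ℕ → ℝ) (hpp : ∀ i ∈ Icc 1 n, 0 < p i)
    (hp : ∑ i ∈ Icc 1 n, p i = 1) (gap : ℝ) (hgap : IsSpectralGap n p ν gap) (f : ℕ → ℝ) :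
    gap * varPi n p f ≤ EForm n ν f f := by
  by_cases hf : Nonconstant n f
  · have := hgap.2 ⟨f, hf, rfl⟩
    rwa [le_div_iff₀ (var_pos n p f hpp hp hf)] at this
  · rw [EForm_const n ν f hf, var_const n p f hp hf]; simp

lemma EForm_add (n : ℕ) (ν f g : ℕ → ℝ) (t : ℝ) :
    EForm n ν (fun i => f i + t * g i) (fun i => f i + t * g i)
      = EForm n ν f f + 2 * t * EForm n ν f g + t^2 * EForm n ν g g := by
  unfold EForm
  simp only [Finset.mul_sum, ← Finset.sum_add_distrib]
  refine Finset.sum_congr rfl fun i _ => by ring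

lemma var_add (n : ℕ) (p f g : ℕ → ℝ) (t : ℝ) :
    varPi n p (fun i => f i + t * g i)
      = varPi n p f + 2 * t * (piMean n p (fun i => f i * g i) - piMean n p f * piMean n p g)
        + t^2 * varPi n p g := by
  have h1 : piMean n p (fun i => f i + t * g i) = piMean n p f + t * piMean n p g := by
    unfold piMean
    simp only [Finset.mul_sum, ← Finset.sum_add_distrib]
    refine Finset.sum_congr rfl fun i _ => by ring
  have h2 : piMean n p (fun i => (f i + t * g i)^2) = piMean n p (fun i => f i ^2)
      + 2 * t * piMean n p (fun i => f i * g i) + t^2 * piMean n p (fun i => g i ^ 2) := by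
    unfold piMean
    simp only [Finset.mul_sum, ← Finset.sum_add_distrib]
    refine Finset.sum_congr rfl fun i _ => by ring
  simp only [varPi] at *
  rw [h1, h2]; ring

lemma quad_lin (b c : ℝ) (h : ∀ t : ℝ, 0 ≤ 2 * t * b + t^2 * c) : b = 0 := by
  have hd : ∀ c', c ≤ c' → 0 < c' → b = 0 := by
    intro c' hc hc'
    have h1 := h (-b / c')
    have h2 : (-b/c')^2 * c ≤ (-b/c')^2 * c' := mul_le_mul_of_nonneg_left hc (sq_nonneg _)
    have h3 : 2 * (-b/c') * b + (-b/c')^2 * c' = - (b^2 / c') := by field_simp; ring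
    have h4 : b^2 / c' ≤ 0 := by linarith
    have h5 : b^2 ≤ 0 := by
      rw [div_le_iff₀ hc'] at h4; simpa using h4
    exact pow_eq_zero_iff (two_ne_zero) |>.1 (le_antisymm h5 (sq_nonneg b))
  exact hd (|c| + 1) (by linarith [le_abs_self c]) (by positivity)

lemma minimizer_eq (n : ℕ) (hn : 1 ≤ n) (p ν : ℕ → ℝ) (hpp : ∀ i ∈ Icc 1 n, 0 < p i)
    (hp : ∑ i ∈ Icc 1 n, p i = 1) (h0 : ν 0 = 0) (h1 : ν n = 0)
    (gap : ℝ) (hgap : IsSpectralGap n p ν gap) (ψ : ℕ → ℝ)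
    (hm : EForm n ν ψ ψ = gap * varPi n p ψ) (i : ℕ) (hi : i ∈ Icc 1 n) :
    flux ν ψ (i-1) - flux ν ψ i = gap * (p i * (ψ i - piMean n p ψ)) := by
  set g : ℕ → ℝ := fun j => if j = i then 1 else 0 with hg
  have key := quad_lin (EForm n ν ψ g - gap * (piMean n p (fun i => ψ i * g i) -
      piMean n p ψ * piMean n p g)) (EForm n ν g g - gap * varPi n p g) (by
    intro t
    have := gap_le n p ν hpp hp gap hgap (fun i => ψ i + t * g i)
    rw [EForm_add, var_add, hm] at this
    linarith)
  rw [EForm_eq n hn ν ψ g h0 h1] at key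
  have e1 : ∑ j ∈ Icc 1 n, (flux ν ψ (j-1) - flux ν ψ j) * g j = flux ν ψ (i-1) - flux ν ψ i := by
    rw [Finset.sum_eq_single_of_mem i hi]
    · simp [hg]
    · intro b _ hb; simp [hg, hb]
  have e2 : piMean n p (fun i => ψ i * g i) = ψ i * p i := by
    unfold piMean
    rw [Finset.sum_eq_single_of_mem i hi]
    · simp [hg]
    · intro b _ hb; simp [hg, hb]
  have e3 : piMean n p g = p i := by
    unfold piMean
    rw [Finset.sum_eq_single_of_mem i hi]
    · simp [hg]
    · intro b _ hb; simp [hg, hb]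
  rw [e1, e2, e3] at key
  linarith

lemma mean_lt (n : ℕ) (hn : 1 ≤ n) (p u : ℕ → ℝ) (hpp : ∀ i ∈ Icc 1 n, 0 < p i)
    (hp : ∑ i ∈ Icc 1 n, p i = 1) (hle : ∀ i ∈ Icc 1 n, u i ≤ u n) (h1 : u 1 < u n) :
    piMean n p u < u n := by
  have : piMean n p u < ∑ i ∈ Icc 1 n, u n * p i := by
    refine Finset.sum_lt_sum (fun i hi => mul_le_mul_of_nonneg_right (hle i hi) (hpp i hi).le)
      ⟨1, by simp; omega, mul_lt_mul_of_pos_right h1 (hpp 1 (by simp; omega))⟩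
  rwa [← Finset.mul_sum, hp, mul_one] at this

/-- Cauchy-Schwarz along the path. -/
lemma cs_path (f ψ R : ℕ → ℝ) (x y n : ℕ) (hx : 1 ≤ x) (hxy : x ≤ y) (hy : y ≤ n)
    (hψ : ∀ i, 1 ≤ i → i < n → ψ i < ψ (i+1))
    (hR : ∀ i, 1 ≤ i → R (i+1) = R i + (f (i+1) - f i)^2 / (ψ (i+1) - ψ i)) :
    (f y - f x)^2 ≤ (ψ y - ψ x) * (R y - R x) ∧ 0 ≤ ψ y - ψ x ∧ 0 ≤ R y - R x := by
  induction y, hxy using Nat.le_induction with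
  | base => simp
  | succ y hxy ih =>
    obtain ⟨ih, i1, i2⟩ := ih (by omega)
    have hh : 0 < ψ (y+1) - ψ y := sub_pos.2 (hψ y (by omega) (by omega))
    have hr := hR y (by omega)
    set h := ψ (y+1) - ψ y with hhd
    set g := f (y+1) - f y with hgd
    have q : 0 ≤ g^2 / h := by positivity
    refine ⟨?_, by linarith, by linarith⟩
    have e1 : f (y+1) - f x = (f y - f x) + g := by rw [hgd]; ring
    have e2 : ψ (y+1) - ψ x = (ψ y - ψ x) + h := by rw [hhd]; ring
    have e3 : R (y+1) - R x = (R y - R x) + g^2/h := by rw [hr]; ring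
    rw [e1, e2, e3]
    generalize f y - f x = A at *
    generalize ψ y - ψ x = P at *
    generalize R y - R x = Q at *
    have e4 : h * (g^2/h) = g^2 := by field_simp
    have k1 : 2 * A * g ≤ P * (g^2/h) + h * Q := by
      refine abs_le_of_sq_le_sq' ?_ (by positivity) |>.2
      have : (2 * A * g)^2 = 4 * A^2 * (h * (g^2/h)) := by rw [e4]; ring
      rw [this]
      have : A^2 * (h * (g^2/h)) ≤ P * Q * (h * (g^2/h)) :=
        mul_le_mul_of_nonneg_right ih (by positivity)
      nlinarith [sq_nonneg (P * (g^2/h) - h * Q)]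
    nlinarith

lemma main_ineq (N : ℕ) (p ν ψ f : ℕ → ℝ) (lam : ℝ) (hlam : 0 < lam)
    (hpp : ∀ i ∈ Icc 1 (N+1), 0 < p i) (hp : ∑ i ∈ Icc 1 (N+1), p i = 1)
    (hψ : ∀ i, 1 ≤ i → i < N+1 → ψ i < ψ (i+1))
    (ha : ∀ i, 1 ≤ i → i < N+1 → flux ν ψ i = - lam * ∑ j ∈ Icc 1 i, ψ j * p j)
    (hM : piMean (N+1) p ψ ≤ 0) :
    lam * varPi (N+1) p f ≤ EForm (N+1) ν f f ∧
    (Nonconstant (N+1) f → piMean (N+1) p ψ < 0 → lam * varPi (N+1) p f < EForm (N+1) ν f f) := by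
  set R : ℕ → ℝ := fun k => ∑ i ∈ Ico 1 k, (f (i+1) - f i)^2 / (ψ (i+1) - ψ i) with hRd
  have hR : ∀ i, 1 ≤ i → R (i+1) = R i + (f (i+1) - f i)^2 / (ψ (i+1) - ψ i) := by
    intro i hi
    simp only [hRd]
    rw [Finset.sum_Ico_succ_top hi]
  have cs := fun x y hx hxy hy => cs_path f ψ R x y (N+1) hx hxy hy hψ hR
  have hcov : varPi (N+1) p f ≤ ∑ i ∈ Icc 1 (N+1), ψ i * R i * p i
      - piMean (N+1) p ψ * piMean (N+1) p R := by
    have h1 := var_double (N+1) p f hp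
    have h2 := cov_double (Icc 1 (N+1)) p ψ R hp
    have h3 : ∑ x ∈ Icc 1 (N+1), ∑ y ∈ Icc 1 (N+1), p x * p y * (f y - f x)^2 ≤
        ∑ x ∈ Icc 1 (N+1), ∑ y ∈ Icc 1 (N+1), p x * p y * ((ψ y - ψ x) * (R y - R x)) := by
      refine Finset.sum_le_sum fun x hx => Finset.sum_le_sum fun y hy => ?_
      refine mul_le_mul_of_nonneg_left ?_ (mul_pos (hpp x hx) (hpp y hy)).le
      rw [Finset.mem_Icc] at hx hy
      rcases le_total x y with h | h
      · exact (cs x y hx.1 h hy.2).1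
      · have := (cs y x hy.1 h hx.2).1
        nlinarith
    unfold piMean
    linarith
  have hab : lam * ∑ i ∈ Icc 1 (N+1), ψ i * R i * p i
      = EForm (N+1) ν f f + lam * piMean (N+1) p ψ * R (N+1) := by
    have h1 := aux_abel (fun i => ψ i * p i) R N
    have h2 : ∑ i ∈ Icc 1 (N+1), ψ i * R i * p i = ∑ i ∈ Icc 1 (N+1), ψ i * p i * R i :=
      Finset.sum_congr rfl fun i _ => by ring
    rw [h2, h1]
    have h3 : EForm (N+1) ν f f
        = - lam * ∑ i ∈ Icc 1 N, (∑ j ∈ Icc 1 i, ψ j * p j) * (R (i+1) - R i) := by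
      unfold EForm
      rw [Nat.add_sub_cancel, Finset.mul_sum]
      refine Finset.sum_congr rfl fun i hi => ?_
      rw [Finset.mem_Icc] at hi
      rw [← mul_assoc, ← ha i hi.1 (by omega), hR i hi.1]
      have := hψ i hi.1 (by omega)
      have : ψ (i+1) - ψ i ≠ 0 := by linarith [sub_pos.2 this] |> fun h : 0 < ψ (i+1) - ψ i => h.ne'
      unfold flux
      field_simp
      ring
    rw [h3]
    unfold piMean
    ring
  have hcov' := mul_le_mul_of_nonneg_left hcov hlam.le
  rw [mul_sub, hab] at hcov'
  have hRn : ∀ i ∈ Icc 1 (N+1), R i ≤ R (N+1) := by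
    intro i hi
    rw [Finset.mem_Icc] at hi
    linarith [(cs i (N+1) hi.1 hi.2 le_rfl).2.2]
  have hle : piMean (N+1) p R ≤ R (N+1) := by
    have : piMean (N+1) p R ≤ ∑ i ∈ Icc 1 (N+1), R (N+1) * p i :=
      Finset.sum_le_sum fun i hi => mul_le_mul_of_nonneg_right (hRn i hi) (hpp i hi).le
    rwa [← Finset.mul_sum, hp, mul_one] at this
  constructor
  · have : lam * piMean (N+1) p ψ * (R (N+1) - piMean (N+1) p R) ≤ 0 :=
      mul_nonpos_of_nonpos_of_nonneg (mul_nonpos_of_nonneg_of_nonpos hlam.le hM) (by linarith)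
    linarith
  · intro hf hM'
    have hR1 : R 1 < R (N+1) := by
      by_contra hcon
      push Not at hcon
      apply var_pos _ p f hpp hp hf |>.ne'
      apply var_const _ p f hp
      unfold Nonconstant
      push Not
      have hz : ∀ i ∈ Icc 1 (N+1), f i = f 1 := by
        intro i hi
        have hi' := hRn i hi
        rw [Finset.mem_Icc] at hi
        obtain ⟨c1, c2, c3⟩ := cs 1 i le_rfl hi.1 hi.2
        have : R i - R 1 = 0 := by linarith
        rw [this, mul_zero] at c1
        have := pow_eq_zero_iff (two_ne_zero) |>.1 (le_antisymm c1 (sq_nonneg _))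
        linarith
      intro i hi j hj
      rw [hz i hi, hz j hj]
    have hlt := mean_lt (N+1) (by omega) p R hpp hp hRn hR1
    have : lam * piMean (N+1) p ψ * (R (N+1) - piMean (N+1) p R) < 0 :=
      mul_neg_of_neg_of_pos (mul_neg_of_pos_of_neg hlam hM') (by linarith)
    linarith

theorem stmt5 (n : ℕ) (hn : 2 ≤ n) (π ν : ℕ → ℝ)
    (hπ : ∀ i ∈ Finset.Icc 1 n, 0 < π i)
    (hπ1 : ∑ i ∈ Finset.Icc 1 n, π i = 1)
    (hν : ∀ i ∈ Finset.Icc 1 (n - 1), 0 < ν i)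
    (hν0 : ν 0 = 0) (hνn : ν n = 0)
    (gap : ℝ) (hgap : IsSpectralGap n π ν gap)
    (lam : ℝ) (hlam : 0 < lam)
    (ψ : ℕ → ℝ) (hψ1 : ψ 1 < 0)
    (hrec : PosPartRec n π ν lam ψ) :
    (EForm n ν ψ ψ = lam * varPi n π ψ ↔ piMean n π ψ = 0) ∧
    (piMean n π ψ = 0 ↔ lam = gap) ∧
    (3 ≤ n → (lam = gap ↔ EForm n ν ψ ψ = gap * varPi n π ψ)) := by
  obtain ⟨N, rfl⟩ : ∃ N, n = N + 1 := ⟨n - 1, by omega⟩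
  have hνp : ∀ i, 1 ≤ i → i < N+1 → 0 < ν i := fun i h1 h2 =>
    hν i (Finset.mem_Icc.2 ⟨h1, by omega⟩)
  have hπp : ∀ i, 1 ≤ i → i ≤ N+1 → 0 < π i := fun i h1 h2 =>
    hπ i (Finset.mem_Icc.2 ⟨h1, by omega⟩)
  have f0 : flux ν ψ 0 = 0 := by simp [flux, hν0]
  have fn : flux ν ψ (N+1) = 0 := by simp [flux, hνn]
  have frec : ∀ i, 1 ≤ i → i < N+1 →
      flux ν ψ i = max (flux ν ψ (i-1) - lam * (π i * ψ i)) 0 := by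
    intro i h1 h2
    have hv := hνp i h1 h2
    have h := hrec i h1 h2
    have e : flux ν ψ (i-1) = (ψ i - ψ (i-1)) * ν (i-1) := by
      unfold flux; rw [Nat.sub_add_cancel h1]
    rw [e]
    unfold flux
    rw [h]
    field_simp
    ring
  have fnn : ∀ i, 1 ≤ i → i < N+1 → 0 ≤ flux ν ψ i := fun i h1 h2 => by
    rw [frec i h1 h2]; exact le_max_right _ _
  have fnn' : ∀ i, i ≤ N+1 → 0 ≤ flux ν ψ i := fun i h2 => by
    rcases Nat.eq_zero_or_pos i with rfl | h
    · exact f0.ge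
    · rcases Nat.lt_or_ge i (N+1) with h' | h'
      · exact fnn i h h'
      · rw [le_antisymm h2 h', fn]
  have hstep : ∀ i, 1 ≤ i → i < N+1 → ψ i ≤ ψ (i+1) := fun i h1 h2 => by
    have := fnn i h1 h2
    unfold flux at this
    have := nonneg_of_mul_nonneg_left this (hνp i h1 h2)
    linarith
  have hmono : ∀ i j, 1 ≤ i → i ≤ j → j ≤ N+1 → ψ i ≤ ψ j := by
    intro i j h1 hij
    induction j, hij using Nat.le_induction with
    | base => intro _; exact le_rfl
    | succ j hij ih => intro h; exact (ih (by omega)).trans (hstep j (by omega) (by omega))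
  have a1 : 0 < flux ν ψ 1 := by
    rw [frec 1 le_rfl (by omega)]
    refine lt_max_of_lt_left ?_
    simp only [Nat.sub_self, f0]
    have := mul_neg_of_pos_of_neg (hπp 1 le_rfl (by omega)) hψ1
    nlinarith
  have h12 : ψ 1 < ψ 2 := by
    unfold flux at a1
    have := pos_of_mul_pos_of_pos_right a1 (hνp 1 le_rfl (by omega)).le
    norm_num at this
    linarith
  have h1n : ψ 1 < ψ (N+1) := h12.trans_le (hmono 2 (N+1) (by omega) (by omega) le_rfl)
  have hψle : ∀ i ∈ Icc 1 (N+1), ψ i ≤ ψ (N+1) := fun i hi => by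
    rw [Finset.mem_Icc] at hi; exact hmono i _ hi.1 hi.2 le_rfl
  have hMn : piMean (N+1) π ψ < ψ (N+1) := mean_lt _ (by omega) π ψ hπ hπ1 hψle h1n
  have hnc : Nonconstant (N+1) ψ :=
    ⟨1, by simp, N+1, by simp, h1n.ne⟩
  have hvar : 0 < varPi (N+1) π ψ := var_pos _ π ψ hπ hπ1 hnc
  have htr : ∀ i, 1 ≤ i → i < N+1 → flux ν ψ (i-1) - lam * (π i * ψ i) < 0 → ψ i = ψ (N+1) := by
    intro i h1 h2 hlt
    have hpos : 0 < ψ i := by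
      have h3 := fnn' (i-1) (by omega)
      have h4 : 0 < lam * (π i * ψ i) := by linarith
      have h5 := pos_of_mul_pos_of_pos_left h4 hlam.le
      exact pos_of_mul_pos_of_pos_left h5 (hπp i h1 h2.le).le
    have : ∀ j, i ≤ j → j < N+1 → flux ν ψ j = 0 ∧ ψ (j+1) = ψ i := by
      intro j hij
      induction j, hij using Nat.le_induction with
      | base =>
        intro _
        have e : flux ν ψ i = 0 := by rw [frec i h1 h2]; exact max_eq_right hlt.le
        refine ⟨e, ?_⟩
        unfold flux at e
        have := (mul_eq_zero.1 e).resolve_right (hνp i h1 h2).ne'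
        linarith
      | succ j hij ih =>
        intro hj
        obtain ⟨e1, e2⟩ := ih (by omega)
        have e : flux ν ψ (j+1) = 0 := by
          rw [frec (j+1) (by omega) hj]
          apply max_eq_right
          rw [Nat.add_sub_cancel, e1, e2]
          have := mul_pos hlam (mul_pos (hπp (j+1) (by omega) hj.le) hpos)
          linarith
        refine ⟨e, ?_⟩
        unfold flux at e
        have := (mul_eq_zero.1 e).resolve_right (hνp (j+1) (by omega) hj).ne'
        linarith
    exact (this N (by omega) (by omega)).2.symm
  have hclaim : ∀ i, 1 ≤ i → i ≤ N+1 →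
      flux ν ψ (i-1) - flux ν ψ i = lam * (π i * ψ i) ∨ ψ i = ψ (N+1) := by
    intro i h1 h2
    rcases Nat.lt_or_ge i (N+1) with h | h
    · rcases lt_or_ge (flux ν ψ (i-1) - lam * (π i * ψ i)) 0 with h' | h'
      · exact Or.inr (htr i h1 h h')
      · left
        rw [frec i h1 h, max_eq_left h']; ring
    · right; rw [le_antisymm h2 h]
  have hE : EForm (N+1) ν ψ ψ - lam * varPi (N+1) π ψ
      = lam * piMean (N+1) π ψ * (piMean (N+1) π ψ - ψ (N+1)) := by
    have e1 := EForm_eq (N+1) (by omega) ν ψ ψ hν0 hνn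
    have e2 : ∑ i ∈ Icc 1 (N+1), ((flux ν ψ (i-1) - flux ν ψ i) - lam * (ψ i * π i))
        * (ψ i - ψ (N+1)) = 0 := by
      refine Finset.sum_eq_zero fun i hi => ?_
      rw [Finset.mem_Icc] at hi
      rcases hclaim i hi.1 hi.2 with h | h
      · rw [h]; ring
      · rw [h]; ring
    have e3 := aux_telesc (flux ν ψ) f0 (N+1)
    rw [fn] at e3
    have e4 : ∑ i ∈ Icc 1 (N+1), ((flux ν ψ (i-1) - flux ν ψ i) - lam * (ψ i * π i))
        * (ψ i - ψ (N+1)) = ∑ i ∈ Icc 1 (N+1), (flux ν ψ (i-1) - flux ν ψ i) * ψ i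
          - lam * piMean (N+1) π (fun i => ψ i ^ 2)
          - (∑ i ∈ Icc 1 (N+1), (flux ν ψ (i-1) - flux ν ψ i)) * ψ (N+1)
          + lam * piMean (N+1) π ψ * ψ (N+1) := by
      unfold piMean
      simp only [Finset.mul_sum, Finset.sum_mul, ← Finset.sum_sub_distrib,
        ← Finset.sum_add_distrib]
      refine Finset.sum_congr rfl fun i _ => by ring
    rw [e4, e3, ← e1] at e2
    unfold varPi
    linarith
  have h12iff : EForm (N+1) ν ψ ψ = lam * varPi (N+1) π ψ ↔ piMean (N+1) π ψ = 0 := by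
    rw [← sub_eq_zero, hE]
    have : piMean (N+1) π ψ - ψ (N+1) ≠ 0 := (sub_neg.2 hMn).ne
    simp [this, hlam.ne']
  have hneg : piMean (N+1) π ψ ≤ 0 → (∀ i, 1 ≤ i → i < N+1 → ψ i < ψ (i+1)) ∧
      (∀ i, 1 ≤ i → i < N+1 → flux ν ψ i = - lam * ∑ j ∈ Icc 1 i, ψ j * π j) := by
    intro hM
    have hT : ∀ i, 1 ≤ i → i < N+1 → ∑ j ∈ Icc 1 i, ψ j * π j < 0 := by
      intro i h1 h2
      rcases le_or_gt (ψ i) 0 with h | h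
      · have : 0 < ∑ j ∈ Icc 1 i, -(ψ j * π j) := by
          refine Finset.sum_pos' (fun j hj => ?_) ⟨1, by simp; omega, ?_⟩
          · rw [Finset.mem_Icc] at hj
            have := hmono j i hj.1 hj.2 (by omega)
            have := hπp j hj.1 (by omega)
            nlinarith
          · have := hπp 1 le_rfl (by omega)
            nlinarith
        rw [Finset.sum_neg_distrib] at this
        linarith
      · have : ∀ k, i ≤ k → k ≤ N + 1 → i < k →
            ∑ j ∈ Icc 1 i, ψ j * π j < ∑ j ∈ Icc 1 k, ψ j * π j := by
          intro k hk
          induction k, hk using Nat.le_induction with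
          | base => intro _ h; omega
          | succ k hk ih =>
            intro hk1 _
            rw [Finset.sum_Icc_succ_top (by omega)]
            have p1 := mul_pos (h.trans_le (hmono i (k+1) h1 (by omega) hk1))
              (hπp (k+1) (by omega) hk1)
            rcases Nat.lt_or_ge i k with h' | h'
            · linarith [ih (by omega) h']
            · rw [le_antisymm hk h'] at *; linarith
        have := this (N+1) h2.le le_rfl h2
        unfold piMean at hM
        linarith
    have hF : ∀ i, i < N+1 → flux ν ψ i = - lam * ∑ j ∈ Icc 1 i, ψ j * π j := by
      intro i
      induction i with
      | zero => intro _; simp [f0]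
      | succ i ih =>
        intro h
        rw [frec (i+1) (by omega) h, Nat.add_sub_cancel, ih (by omega)]
        have := hT (i+1) (by omega) h
        rw [Finset.sum_Icc_succ_top (by omega)] at this ⊢
        rw [max_eq_left]
        · ring
        · nlinarith
    refine ⟨fun i h1 h2 => ?_, fun i _ h2 => hF i h2⟩
    have h3 : 0 < flux ν ψ i := by
      rw [hF i h2]; nlinarith [hT i h1 h2]
    unfold flux at h3
    have := pos_of_mul_pos_of_pos_right h3 (hνp i h1 h2).le
    linarith
  have hgle := gap_le (N+1) π ν hπ hπ1 gap hgap ψ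
  obtain ⟨fg, hfg, hfgE⟩ := hgap.1
  have hfv := var_pos _ π fg hπ hπ1 hfg
  rw [eq_div_iff hfv.ne'] at hfgE
  have h23iff : piMean (N+1) π ψ = 0 ↔ lam = gap := by
    constructor
    · intro hM
      obtain ⟨s1, s2⟩ := hneg hM.le
      have h1 := (main_ineq N π ν ψ fg lam hlam hπ hπ1 s1 s2 hM.le).1
      rw [← hfgE] at h1
      have h2 := h12iff.2 hM
      rw [h2] at hgle
      exact le_antisymm (le_of_mul_le_mul_right h1 hfv) (le_of_mul_le_mul_right hgle hvar)
    · intro hl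
      rcases lt_trichotomy (piMean (N+1) π ψ) 0 with hM | hM | hM
      · obtain ⟨s1, s2⟩ := hneg hM.le
        have h1 := (main_ineq N π ν ψ fg lam hlam hπ hπ1 s1 s2 hM.le).2 hfg hM
        rw [← hfgE, hl] at h1
        exact absurd h1 (lt_irrefl _)
      · exact hM
      · have := mul_neg_of_pos_of_neg (mul_pos hlam hM) (sub_neg.2 hMn)
        rw [← hl] at hgle
        linarith
  refine ⟨h12iff, h23iff, fun h3 => ⟨fun hl => ?_, fun h4 => ?_⟩⟩
  · rw [← hl]; exact h12iff.2 (h23iff.2 hl)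
  · have hmin := minimizer_eq (N+1) (by omega) π ν hπ hπ1 hν0 hνn gap hgap ψ h4
    have hEpos : 0 < EForm (N+1) ν ψ ψ := by
      unfold EForm
      refine Finset.sum_pos' (fun i hi => ?_) ⟨1, by simp; omega, ?_⟩
      · exact mul_nonneg (mul_self_nonneg _) (hν i hi).le
      · have : ψ 1 - ψ (1+1) ≠ 0 := (sub_neg.2 h12).ne
        exact mul_pos (mul_self_pos.2 this) (hνp 1 le_rfl (by omega))
    have hgp : 0 < gap := by
      rw [h4] at hEpos
      exact pos_of_mul_pos_of_pos_right hEpos hvar.le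
    have hlast := hmin (N+1) (by simp)
    rw [fn, Nat.add_sub_cancel, sub_zero] at hlast
    have hfN : 0 < flux ν ψ N := by
      rw [hlast]
      exact mul_pos hgp (mul_pos (hπp (N+1) (by omega) le_rfl) (sub_pos.2 hMn))
    have hNlt : ψ N < ψ (N+1) := by
      unfold flux at hfN
      have := pos_of_mul_pos_of_pos_right hfN (hνp N (by omega) (by omega)).le
      linarith
    have heq : ∀ i, 1 ≤ i → i ≤ N → lam * ψ i = gap * (ψ i - piMean (N+1) π ψ) := by
      intro i h1 h2
      have hlt := (hmono i N h1 h2 (by omega)).trans_lt hNlt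
      have e1 := (hclaim i h1 (by omega)).resolve_right hlt.ne
      rw [hmin i (Finset.mem_Icc.2 ⟨h1, by omega⟩)] at e1
      have := hπp i h1 (by omega)
      apply mul_left_cancel₀ this.ne'
      linarith
    have q1 := heq 1 le_rfl (by omega)
    have q2 := heq 2 (by omega) (by omega)
    have : (lam - gap) * (ψ 2 - ψ 1) = 0 := by linarith
    have := (mul_eq_zero.1 this).resolve_right (sub_pos.2 h12).ne'
    linarith
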